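/- In the noisy-barrier setup, for all 0 ≤ t ≤ θ and every bounded F_θ ⊗ B(ℝ)-measurable function φ_θ : Ω × ℝ → ℝ, one has, P-almost surely, E_P[φ_θ(·, L + ε_θ) 1_{X*_θ > L} | F^I_t] = E_P[φ_θ(·, L + ε_θ) 1_{X*_θ > L} | F_t ∨ σ(L_t)]; that is, the σ-algebra σ(ε_s − ε_t : s ≤ t) of past noise increments can be dropped from the conditioning. (First reduction step in the proof of Proposition 5.1.) -/

import Mathlib

open MeasureTheory ProbabilityTheory Set
open scoped NNReal Classical

noncomputable section

/-- Running infimum `X*_t = inf_{s ≤ t} X_s` of the process `X` over the time interval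
`[0, t]`. -/
def runInf {Ω : Type*} (X : ℝ≥0 → Ω → ℝ) (t : ℝ≥0) (ω : Ω) : ℝ :=
  ⨅ s : Set.Icc (0 : ℝ≥0) t, X s.1 ω

/-- The insider's default-free σ-algebra `F^I_t = F_t ∨ σ(L_s = L + ε_s : s ≤ t)`. -/
def insiderSigma {Ω : Type*} [m0 : MeasurableSpace Ω] (F : Filtration ℝ≥0 m0)
    (L : Ω → ℝ) (ε : ℝ≥0 → Ω → ℝ) (t : ℝ≥0) : MeasurableSpace Ω :=
  F t ⊔ ⨆ s ∈ Set.Iic t, MeasurableSpace.comap (fun ω => L ω + ε s ω) inferInstance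

/-!
Write `G_t` for the σ-algebra of the past increments. Once `G_t` is independent of the whole
future noise `(ε_s)_{s ≥ t}`, it is independent of everything the payoff and `F_t ∨ σ(L_t)` depend
on, and a σ-algebra independent of all the rest can be dropped from a conditioning.

By backward induction over finitely many times it suffices that `G_s` is independent of
`ε_s - ε_{s'}` for `s ≤ s'`. On the Fourier side this is a factorisation at every frequency `v`.
Dividing `E[exp (i v ε_s) | G_s]` by `E[exp (i v ε_{s'})]` yields it only where characteristic
functions do not vanish; by continuity of paths this holds on `[0, θ]` for all small `v`.
Factorisation at `v` propagates to `2 v`: on the unit circle `z² = 3 z - 3 + z̄ + O(|z - 1|³)`, so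
over a fine subdivision the character of frequency `2 v` of an increment is close in mean to a
product of factors that are affine in `exp (± i v ·)`, and such products factorise. The cubic error
beats the sum of squares of the small increments, which the nonvanishing of the characteristic
function at `v` controls.
-/

section SigmaAlgebras

variable {Ω E : Type*} {m0 : MeasurableSpace Ω} {μ : Measure Ω}
  {m₁ m₂ m₃ : MeasurableSpace Ω}

lemma sup_eq_generateFrom_image2_inter (m₁ m₂ : MeasurableSpace Ω) :
    m₁ ⊔ m₂ = MeasurableSpace.generateFrom
      (image2 (· ∩ ·) {s | MeasurableSet[m₁] s} {s | MeasurableSet[m₂] s}) := by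
  refine le_antisymm (sup_le (fun s hs => ?_) fun s hs => ?_)
    (MeasurableSpace.generateFrom_le ?_)
  · exact MeasurableSpace.measurableSet_generateFrom
      ⟨s, hs, univ, @MeasurableSet.univ _ m₂, inter_univ s⟩
  · exact MeasurableSpace.measurableSet_generateFrom
      ⟨univ, @MeasurableSet.univ _ m₁, s, hs, univ_inter s⟩
  · rintro _ ⟨A, hA, B, hB, rfl⟩
    exact @MeasurableSet.inter _ (m₁ ⊔ m₂) _ _ (le_sup_left (a := m₁) _ hA)
      (le_sup_right (a := m₁) _ hB)

lemma isPiSystem_image2_inter (m₁ m₂ : MeasurableSpace Ω) :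
    IsPiSystem (image2 (· ∩ ·) {s | MeasurableSet[m₁] s} {s | MeasurableSet[m₂] s}) := by
  rintro _ ⟨A, hA, B, hB, rfl⟩ _ ⟨A', hA', B', hB', rfl⟩ _
  exact ⟨A ∩ A', @MeasurableSet.inter _ m₁ _ _ hA hA', B ∩ B',
    @MeasurableSet.inter _ m₂ _ _ hB hB', inter_inter_inter_comm A A' B B'⟩

lemma indep_sup_right [IsZeroOrProbabilityMeasure μ]
    (h₁ : m₁ ≤ m0) (h₂ : m₂ ≤ m0) (h₃ : m₃ ≤ m0)
    (h₁₂ : Indep m₁ m₂ μ) (h₁₂₃ : Indep (m₁ ⊔ m₂) m₃ μ) : Indep m₁ (m₂ ⊔ m₃) μ := by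
  refine IndepSets.indep h₁ (sup_le h₂ h₃) (@MeasurableSpace.isPiSystem_measurableSet _ m₁)
    (isPiSystem_image2_inter m₂ m₃) (@MeasurableSpace.generateFrom_measurableSet _ m₁).symm
    (sup_eq_generateFrom_image2_inter m₂ m₃) ?_
  rw [IndepSets_iff]
  rintro A _ hA ⟨B, hB, C, hC, rfl⟩
  rw [Indep_iff] at h₁₂ h₁₂₃
  have hA' : MeasurableSet[m₁ ⊔ m₂] A := le_sup_left (a := m₁) _ hA
  have hB' : MeasurableSet[m₁ ⊔ m₂] B := le_sup_right (a := m₁) _ hB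
  rw [← inter_assoc, h₁₂₃ _ _ (@MeasurableSet.inter _ (m₁ ⊔ m₂) _ _ hA' hB') hC,
    h₁₂₃ _ _ hB' hC, h₁₂ _ _ hA hB, mul_assoc]

variable [NormedAddCommGroup E] [NormedSpace ℝ E] [CompleteSpace E] {f g : Ω → E}

lemma ae_eq_condExp_sup_of_setIntegral_inter_eq [IsFiniteMeasure μ]
    (h₁ : m₁ ≤ m0) (h₂ : m₂ ≤ m0) (hf : Integrable f μ) (hg : Integrable g μ)
    (hgm : AEStronglyMeasurable[m₁ ⊔ m₂] g μ)
    (hfg : ∀ A B, MeasurableSet[m₁] A → MeasurableSet[m₂] B →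
      ∫ ω in A ∩ B, g ω ∂μ = ∫ ω in A ∩ B, f ω ∂μ) :
    g =ᵐ[μ] μ[f | m₁ ⊔ m₂] := by
  have hle : m₁ ⊔ m₂ ≤ m0 := sup_le h₁ h₂
  suffices h : ∀ s, MeasurableSet[m₁ ⊔ m₂] s → ∫ ω in s, g ω ∂μ = ∫ ω in s, f ω ∂μ from
    ae_eq_condExp_of_forall_setIntegral_eq hle hf (fun _ _ _ => hg.integrableOn)
      (fun s hs _ => h s hs) hgm
  have h_univ : ∫ ω, g ω ∂μ = ∫ ω, f ω ∂μ := by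
    simpa using hfg univ univ (@MeasurableSet.univ _ m₁) (@MeasurableSet.univ _ m₂)
  intro s hs
  induction s, hs using MeasurableSpace.induction_on_inter
    (sup_eq_generateFrom_image2_inter m₁ m₂) (isPiSystem_image2_inter m₁ m₂) with
  | empty => simp
  | basic s hs =>
    obtain ⟨A, hA, B, hB, rfl⟩ := hs
    exact hfg A B hA hB
  | compl s hs ih =>
    rw [setIntegral_compl (hle _ hs) hg, setIntegral_compl (hle _ hs) hf, ih, h_univ]
  | iUnion s hd hs ih =>
    rw [integral_iUnion (fun i => hle _ (hs i)) hd hg.integrableOn,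
      integral_iUnion (fun i => hle _ (hs i)) hd hf.integrableOn]
    exact tsum_congr ih

lemma setIntegral_inter_of_indep [IsFiniteMeasure μ] (h₁ : m₁ ≤ m0) (h₂ : m₂ ≤ m0)
    (h : Indep m₁ m₂ μ) (hf : StronglyMeasurable[m₁] f) (hfi : Integrable f μ) {A B : Set Ω}
    (hA : MeasurableSet[m₁] A) (hB : MeasurableSet[m₂] B) :
    ∫ ω in A ∩ B, f ω ∂μ = μ.real B • ∫ ω in A, f ω ∂μ := by
  have hAi : Integrable (A.indicator f) μ := hfi.indicator (h₁ _ hA)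
  calc ∫ ω in A ∩ B, f ω ∂μ
      = ∫ ω in B, A.indicator f ω ∂μ := by
        rw [setIntegral_indicator (h₁ _ hA), inter_comm]
    _ = ∫ ω in B, (μ[A.indicator f | m₂]) ω ∂μ := (setIntegral_condExp h₂ hAi hB).symm
    _ = ∫ _ in B, (∫ ω, A.indicator f ω ∂μ) ∂μ :=
        integral_congr_ae (ae_restrict_of_ae (condExp_indep_eq h₁ h₂ (hf.indicator hA) h))
    _ = μ.real B • ∫ ω in A, f ω ∂μ := by
        rw [setIntegral_const, integral_indicator (h₁ _ hA)]

lemma condExp_sup_of_indep [IsFiniteMeasure μ] (h₁₃ : m₁ ≤ m₃) (h₂ : m₂ ≤ m0) (h₃ : m₃ ≤ m0)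
    (h : Indep m₂ m₃ μ) (hf : StronglyMeasurable[m₃] f) (hfi : Integrable f μ) :
    μ[f | m₁ ⊔ m₂] =ᵐ[μ] μ[f | m₁] := by
  have h₁ : m₁ ≤ m0 := h₁₃.trans h₃
  refine (ae_eq_condExp_sup_of_setIntegral_inter_eq h₁ h₂ hfi integrable_condExp
    (stronglyMeasurable_condExp.mono (le_sup_left : m₁ ≤ m₁ ⊔ m₂)).aestronglyMeasurable
    fun A B hA hB => ?_).symm
  rw [setIntegral_inter_of_indep h₃ h₂ h.symm (stronglyMeasurable_condExp.mono h₁₃)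
      integrable_condExp (h₁₃ _ hA) hB,
    setIntegral_inter_of_indep h₃ h₂ h.symm hf hfi (h₁₃ _ hA) hB, setIntegral_condExp h₁ hfi hA]

end SigmaAlgebras

section RangeProducts

variable {Ω 𝕜 : Type*} [RCLike 𝕜] {m : ℕ → MeasurableSpace Ω} {m0 : MeasurableSpace Ω}
  {μ : Measure Ω} {f : ℕ → Ω → 𝕜} {C : ℝ}

lemma integrable_prod_of_norm_le [IsFiniteMeasure μ]
    (hfm : ∀ k, StronglyMeasurable[m0] (f k)) (hfC : ∀ k ω, ‖f k ω‖ ≤ C) (n : ℕ) :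
    Integrable (fun ω => ∏ k ∈ Finset.range n, f k ω) μ := by
  refine .of_bound (C := C ^ n) (Finset.aestronglyMeasurable_fun_prod _ fun k _ =>
    (hfm k).aestronglyMeasurable) (.of_forall fun ω => ?_)
  calc ‖∏ k ∈ Finset.range n, f k ω‖ = ∏ k ∈ Finset.range n, ‖f k ω‖ := norm_prod _ _
    _ ≤ ∏ _k ∈ Finset.range n, C :=
        Finset.prod_le_prod (fun _ _ => norm_nonneg _) fun k _ => hfC k ω
    _ = C ^ n := by rw [Finset.prod_const, Finset.card_range]

lemma stronglyMeasurable_prod_range (hm : Monotone m)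
    (hfm : ∀ k, StronglyMeasurable[m (k + 1)] (f k)) (n : ℕ) :
    StronglyMeasurable[m n] fun ω => ∏ k ∈ Finset.range n, f k ω :=
  Finset.stronglyMeasurable_fun_prod _ fun k hk =>
    (hfm k).mono (hm (Finset.mem_range.mp hk))

end RangeProducts

/-- `f` is mean independent of the σ-algebra `m`: conditioning on `m` does not change its mean.
For the characters `exp (i u D)` of a random variable `D` this is the Fourier side of
independence, and unlike independence it can be tested at a single frequency `u`. -/
def MeanIndep {Ω E : Type*} [NormedAddCommGroup E] [NormedSpace ℝ E] [CompleteSpace E]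
    (f : Ω → E) (m : MeasurableSpace Ω) {_ : MeasurableSpace Ω} (μ : Measure Ω) : Prop :=
  μ[f | m] =ᵐ[μ] fun _ => ∫ ω, f ω ∂μ

namespace MeanIndep

section BanachValued

variable {Ω E G : Type*} {m m0 : MeasurableSpace Ω} {μ : Measure Ω}
  [NormedAddCommGroup E] [NormedSpace ℝ E] [CompleteSpace E] {f g : Ω → E}
  [NormedAddCommGroup G] [NormedSpace ℝ G] [CompleteSpace G]

lemma of_condExp_ae_eq_const [IsProbabilityMeasure μ] (hm : m ≤ m0) {c : E}
    (h : μ[f | m] =ᵐ[μ] fun _ => c) : MeanIndep f m μ := by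
  have hc : ∫ ω, f ω ∂μ = c := by
    rw [← integral_condExp hm, integral_congr_ae h, integral_const, probReal_univ, one_smul]
  rw [MeanIndep, hc]
  exact h

protected lemma const [IsProbabilityMeasure μ] (hm : m ≤ m0) (c : E) :
    MeanIndep (fun _ : Ω => c) m μ :=
  of_condExp_ae_eq_const hm (by rw [condExp_const hm])

lemma of_indep [IsProbabilityMeasure μ] {m₂ : MeasurableSpace Ω} (hm : m ≤ m0) (hm₂ : m₂ ≤ m0)
    (hf : StronglyMeasurable[m₂] f) (h : Indep m₂ m μ) : MeanIndep f m μ :=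
  condExp_indep_eq hm₂ hm hf h

lemma add (hf : MeanIndep f m μ) (hg : MeanIndep g m μ) (hfi : Integrable f μ)
    (hgi : Integrable g μ) : MeanIndep (fun ω => f ω + g ω) m μ := by
  filter_upwards [condExp_add hfi hgi m, hf, hg] with ω hadd hf hg
  rw [integral_add hfi hgi, ← hf, ← hg]
  exact hadd

lemma clm_comp (T : E →L[ℝ] G) (hf : MeanIndep f m μ) (hfi : Integrable f μ) :
    MeanIndep (fun ω => T (f ω)) m μ := by
  filter_upwards [T.comp_condExp_comm (m := m) hfi, hf] with ω hT hf
  rw [T.integral_comp_comm hfi, ← hf]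
  exact hT.symm

lemma setIntegral_eq [IsFiniteMeasure μ] (hm : m ≤ m0) (hf : MeanIndep f m μ)
    (hfi : Integrable f μ) {A : Set Ω} (hA : MeasurableSet[m] A) :
    ∫ ω in A, f ω ∂μ = μ.real A • ∫ ω, f ω ∂μ := by
  rw [← setIntegral_condExp hm hfi hA, integral_congr_ae (ae_restrict_of_ae hf),
    setIntegral_const]

lemma of_forall_setIntegral_eq [IsFiniteMeasure μ] (hm : m ≤ m0) (hfi : Integrable f μ)
    (h : ∀ A, MeasurableSet[m] A → ∫ ω in A, f ω ∂μ = μ.real A • ∫ ω, f ω ∂μ) :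
    MeanIndep f m μ :=
  (ae_eq_condExp_of_forall_setIntegral_eq hm hfi (fun _ _ _ => integrable_const _ |>.integrableOn)
    (fun A hA _ => by rw [setIntegral_const, h A hA]) aestronglyMeasurable_const).symm

lemma of_forall_exists_integral_norm_sub_le [IsProbabilityMeasure μ] (hm : m ≤ m0)
    (hfi : Integrable f μ)
    (h : ∀ η > 0, ∃ g : Ω → E, Integrable g μ ∧ MeanIndep g m μ ∧ ∫ ω, ‖f ω - g ω‖ ∂μ ≤ η) :
    MeanIndep f m μ := by
  refine of_forall_setIntegral_eq hm hfi fun A hA => ?_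
  refine eq_of_forall_dist_le fun η hη => ?_
  obtain ⟨g, hgi, hg, hfg⟩ := h (η / 2) (half_pos hη)
  have h_univ : ‖∫ ω, f ω ∂μ - ∫ ω, g ω ∂μ‖ ≤ η / 2 := by
    rw [← integral_sub hfi hgi]
    exact (norm_integral_le_integral_norm _).trans hfg
  have h_set : ‖∫ ω in A, f ω ∂μ - ∫ ω in A, g ω ∂μ‖ ≤ η / 2 := by
    rw [← integral_sub hfi.integrableOn hgi.integrableOn]
    refine (norm_integral_le_integral_norm _).trans (le_trans ?_ hfg)
    exact setIntegral_le_integral (hfi.sub hgi).norm (.of_forall fun _ => norm_nonneg _)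
  calc dist (∫ ω in A, f ω ∂μ) (μ.real A • ∫ ω, f ω ∂μ)
      = ‖(∫ ω in A, f ω ∂μ - ∫ ω in A, g ω ∂μ)
          - μ.real A • (∫ ω, f ω ∂μ - ∫ ω, g ω ∂μ)‖ := by
        rw [dist_eq_norm, hg.setIntegral_eq hm hgi hA, smul_sub, sub_sub_sub_cancel_right]
    _ ≤ η / 2 + 1 * (η / 2) := by
        refine (norm_sub_le _ _).trans (add_le_add h_set ?_)
        rw [norm_smul, Real.norm_of_nonneg measureReal_nonneg]
        gcongr
        exact measureReal_le_one
    _ = η := by ring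

end BanachValued

section RCLikeValued

variable {Ω 𝕜 : Type*} [RCLike 𝕜] {m m₁ m₂ m0 : MeasurableSpace Ω} {μ : Measure Ω}
  {f g : Ω → 𝕜}

lemma const_mul (c : 𝕜) (hf : MeanIndep f m μ) (hfi : Integrable f μ) :
    MeanIndep (fun ω => c * f ω) m μ :=
  hf.clm_comp (ContinuousLinearMap.mul ℝ 𝕜 c) hfi

lemma conj (hf : MeanIndep f m μ) (hfi : Integrable f μ) :
    MeanIndep (fun ω => starRingEnd 𝕜 (f ω)) m μ :=
  hf.clm_comp RCLike.conjCLE.toContinuousLinearMap hfi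

lemma condExp_mul (h₁₂ : m₁ ≤ m₂) (h₂ : m₂ ≤ m0) [IsFiniteMeasure μ]
    (hg : MeanIndep g m₂ μ) (hf : StronglyMeasurable[m₂] f)
    (hgi : Integrable g μ) (hfg : Integrable (fun ω => f ω * g ω) μ) :
    μ[fun ω => f ω * g ω | m₁] =ᵐ[μ] fun ω => (∫ ω, g ω ∂μ) * (μ[f | m₁]) ω := by
  have h_pull : μ[fun ω => f ω * g ω | m₂] =ᵐ[μ] fun ω => (∫ ω, g ω ∂μ) * f ω := by
    filter_upwards [condExp_bilin_of_stronglyMeasurable_left (.mul ℝ 𝕜) hf hfg hgi, hg]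
      with ω h h'
    rw [mul_comm, ← h']
    exact h
  calc μ[fun ω => f ω * g ω | m₁]
      =ᵐ[μ] μ[μ[fun ω => f ω * g ω | m₂] | m₁] := (condExp_condExp_of_le h₁₂ h₂).symm
    _ =ᵐ[μ] μ[fun ω => (∫ ω, g ω ∂μ) * f ω | m₁] := condExp_congr_ae h_pull
    _ =ᵐ[μ] fun ω => (∫ ω, g ω ∂μ) * (μ[f | m₁]) ω := condExp_smul (∫ ω, g ω ∂μ) f m₁

lemma mul (h₁₂ : m₁ ≤ m₂) (h₂ : m₂ ≤ m0) [IsProbabilityMeasure μ]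
    (hf : MeanIndep f m₁ μ) (hg : MeanIndep g m₂ μ) (hfm : StronglyMeasurable[m₂] f)
    (hgi : Integrable g μ) (hfg : Integrable (fun ω => f ω * g ω) μ) :
    MeanIndep (fun ω => f ω * g ω) m₁ μ := by
  refine of_condExp_ae_eq_const (h₁₂.trans h₂) (c := (∫ ω, g ω ∂μ) * ∫ ω, f ω ∂μ) ?_
  filter_upwards [condExp_mul h₁₂ h₂ hg hfm hgi hfg, hf] with ω h h'
  rw [h, h']

lemma integral_mul (hm : m ≤ m0) [IsFiniteMeasure μ] (hg : MeanIndep g m μ)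
    (hf : StronglyMeasurable[m] f) (hgi : Integrable g μ)
    (hfg : Integrable (fun ω => f ω * g ω) μ) :
    ∫ ω, f ω * g ω ∂μ = (∫ ω, f ω ∂μ) * ∫ ω, g ω ∂μ := by
  rw [← integral_condExp hm, integral_congr_ae (condExp_mul le_rfl hm hg hf hgi hfg),
    integral_const_mul, integral_condExp hm, mul_comm]

end RCLikeValued

section Prod

variable {Ω 𝕜 : Type*} [RCLike 𝕜] {m : ℕ → MeasurableSpace Ω} {m0 : MeasurableSpace Ω}
  {μ : Measure Ω} [IsProbabilityMeasure μ] {f : ℕ → Ω → 𝕜} {C : ℝ} {n : ℕ}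

lemma prod (hm : Monotone m) (hm0 : ∀ k, m k ≤ m0)
    (hfm : ∀ k, StronglyMeasurable[m (k + 1)] (f k)) (hfC : ∀ k ω, ‖f k ω‖ ≤ C)
    (hf : ∀ k < n, MeanIndep (f k) (m k) μ) :
    MeanIndep (fun ω => ∏ k ∈ Finset.range n, f k ω) (m 0) μ := by
  have hfm0 (k : ℕ) : StronglyMeasurable[m0] (f k) := (hfm k).mono (hm0 _)
  induction n with
  | zero => simpa using MeanIndep.const (hm0 0) (1 : 𝕜)
  | succ n ih =>
    have hfi : Integrable (f n) μ :=
      .of_bound (hfm0 n).aestronglyMeasurable C (.of_forall (hfC n))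
    have hprod := integrable_prod_of_norm_le (μ := μ) hfm0 hfC (n + 1)
    simp only [Finset.prod_range_succ] at hprod ⊢
    exact (ih fun k hk => hf k (by omega)).mul (hm n.zero_le) (hm0 n) (hf n n.lt_succ_self)
      (stronglyMeasurable_prod_range hm hfm n) hfi hprod

lemma integral_prod (hm : Monotone m) (hm0 : ∀ k, m k ≤ m0)
    (hfm : ∀ k, StronglyMeasurable[m (k + 1)] (f k)) (hfC : ∀ k ω, ‖f k ω‖ ≤ C)
    (hf : ∀ k < n, MeanIndep (f k) (m k) μ) :
    ∫ ω, ∏ k ∈ Finset.range n, f k ω ∂μ = ∏ k ∈ Finset.range n, ∫ ω, f k ω ∂μ := by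
  have hfm0 (k : ℕ) : StronglyMeasurable[m0] (f k) := (hfm k).mono (hm0 _)
  induction n with
  | zero => simp
  | succ n ih =>
    have hfi : Integrable (f n) μ :=
      .of_bound (hfm0 n).aestronglyMeasurable C (.of_forall (hfC n))
    have hprod := integrable_prod_of_norm_le (μ := μ) hfm0 hfC (n + 1)
    simp only [Finset.prod_range_succ] at hprod ⊢
    rw [(hf n n.lt_succ_self).integral_mul (hm0 n) (stronglyMeasurable_prod_range hm hfm n) hfi
      hprod, ih fun k hk => hf k (by omega)]

end Prod

end MeanIndep

section UnitCircle

variable {z : ℂ}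

/-- The first-order trigonometric polynomial `3 z - 3 + z⁻¹` (with `z⁻¹ = conj z` on the unit
circle) which agrees with `z ^ 2` to second order at `z = 1`. It stands in for the square of
`z` in products of many factors close to `1`. -/
def surrogate (z : ℂ) : ℂ := 3 * z - 3 + starRingEnd ℂ z

lemma norm_surrogate_sub_sq (hz : ‖z‖ = 1) : ‖surrogate z - z ^ 2‖ = ‖z - 1‖ ^ 3 := by
  have hconj : z * starRingEnd ℂ z = 1 := by
    rw [Complex.mul_conj, Complex.normSq_eq_norm_sq, hz]
    norm_num
  calc ‖surrogate z - z ^ 2‖ = ‖z * (surrogate z - z ^ 2)‖ := by rw [norm_mul, hz, one_mul]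
    _ = ‖(1 - z) ^ 3‖ := by
        congr 1
        rw [surrogate]
        linear_combination hconj
    _ = ‖z - 1‖ ^ 3 := by rw [norm_pow, norm_sub_rev]

lemma norm_surrogate_le (hz : ‖z‖ = 1) : ‖surrogate z‖ ≤ 7 := by
  calc ‖surrogate z‖ ≤ ‖3 * z‖ + ‖(3 : ℂ)‖ + ‖starRingEnd ℂ z‖ :=
        (norm_add_le _ _).trans (by gcongr; exact norm_sub_le _ _)
    _ = 7 := by
        rw [norm_mul, RCLike.norm_conj, hz]
        norm_num

lemma norm_sub_one_le_two (hz : ‖z‖ = 1) : ‖z - 1‖ ≤ 2 :=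
  (norm_sub_le z 1).trans (by rw [hz, norm_one]; norm_num)

lemma norm_sub_one_sq (hz : ‖z‖ = 1) : ‖z - 1‖ ^ 2 = 2 - 2 * z.re := by
  have h := Complex.sq_norm_sub_sq_re z
  rw [← Complex.normSq_eq_norm_sq, Complex.normSq_apply, Complex.sub_re, Complex.sub_im,
    Complex.one_re, Complex.one_im]
  rw [hz] at h
  linear_combination -h

lemma norm_prod_surrogate_sub_prod_sq_le_exp_sub_one {ι : Type*} (s : Finset ι) {w : ι → ℂ}
    (hw : ∀ k ∈ s, ‖w k‖ = 1) :
    ‖∏ k ∈ s, surrogate (w k) - ∏ k ∈ s, w k ^ 2‖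
      ≤ Real.exp (∑ k ∈ s, ‖w k - 1‖ ^ 3) - 1 := by
  have hne : ∀ k ∈ s, w k ^ 2 ≠ 0 := fun k hk =>
    pow_ne_zero 2 (norm_ne_zero_iff.mp (by rw [hw k hk]; exact one_ne_zero))
  have hcube : ∀ k ∈ s, ‖surrogate (w k) / w k ^ 2 - 1‖ = ‖w k - 1‖ ^ 3 := fun k hk => by
    rw [div_sub_one (hne k hk), norm_div, norm_surrogate_sub_sq (hw k hk), norm_pow, hw k hk,
      one_pow, div_one]
  have hfactor : ∏ k ∈ s, surrogate (w k)
      = (∏ k ∈ s, w k ^ 2) * ∏ k ∈ s, (1 + (surrogate (w k) / w k ^ 2 - 1)) := by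
    rw [← Finset.prod_mul_distrib]
    refine Finset.prod_congr rfl fun k hk => ?_
    rw [add_sub_cancel, mul_div_cancel₀ _ (hne k hk)]
  have hnorm : ‖∏ k ∈ s, w k ^ 2‖ = 1 := by
    rw [norm_prod, Finset.prod_eq_one fun k hk => by rw [norm_pow, hw k hk, one_pow]]
  calc ‖∏ k ∈ s, surrogate (w k) - ∏ k ∈ s, w k ^ 2‖
      = ‖∏ k ∈ s, (1 + (surrogate (w k) / w k ^ 2 - 1)) - 1‖ := by
        rw [hfactor, ← mul_sub_one, norm_mul, hnorm, one_mul]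
    _ ≤ Real.exp (∑ k ∈ s, ‖surrogate (w k) / w k ^ 2 - 1‖) - 1 :=
        s.norm_prod_one_add_sub_one_le _
    _ = Real.exp (∑ k ∈ s, ‖w k - 1‖ ^ 3) - 1 := by rw [Finset.sum_congr rfl hcube]

lemma norm_prod_surrogate_sub_prod_sq_le {ι : Type*} (s : Finset ι) {w : ι → ℂ} {δ : ℝ}
    (hw : ∀ k ∈ s, ‖w k‖ = 1) (hδ₀ : 0 ≤ δ) (hδ : ∀ k ∈ s, ‖w k - 1‖ ≤ δ) :
    ‖∏ k ∈ s, surrogate (w k) - ∏ k ∈ s, w k ^ 2‖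
      ≤ δ * Real.exp (3 * ∑ k ∈ s, ‖w k - 1‖ ^ 2) := by
  set S := ∑ k ∈ s, ‖w k - 1‖ ^ 2
  set T := ∑ k ∈ s, ‖w k - 1‖ ^ 3
  have : 0 ≤ S := Finset.sum_nonneg fun _ _ => sq_nonneg _
  have hT {c : ℝ} (hc : ∀ k ∈ s, ‖w k - 1‖ ≤ c) : T ≤ c * S := by
    rw [Finset.mul_sum]
    refine Finset.sum_le_sum fun k hk => ?_
    rw [pow_succ']
    exact mul_le_mul_of_nonneg_right (hc k hk) (sq_nonneg _)
  calc ‖∏ k ∈ s, surrogate (w k) - ∏ k ∈ s, w k ^ 2‖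
      ≤ Real.exp T - 1 := norm_prod_surrogate_sub_prod_sq_le_exp_sub_one s hw
    _ ≤ T * Real.exp T := by
        have h := mul_le_mul_of_nonneg_right (Real.one_sub_le_exp_neg T) (Real.exp_nonneg T)
        rw [← Real.exp_add, neg_add_cancel, Real.exp_zero] at h
        linarith
    _ ≤ δ * S * Real.exp (2 * S) := by
        gcongr
        · exact hT hδ
        · exact hT fun k hk => norm_sub_one_le_two (hw k hk)
    _ ≤ δ * Real.exp S * Real.exp (2 * S) := by
        gcongr
        linarith [Real.add_one_le_exp S]
    _ = δ * Real.exp (3 * S) := by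
        rw [mul_assoc, ← Real.exp_add]
        ring_nf

/-- The slope of the chord of `x ↦ exp (12 x)` over `[0, 2]`. On the unit circle
`‖z - 1‖ ^ 2 = 2 (1 - z.re)`, so it governs exponential moments of `‖z - 1‖ ^ 2`. -/
def chordSlope : ℝ := (Real.exp 24 - 1) / 2

lemma chordSlope_nonneg : 0 ≤ chordSlope :=
  div_nonneg (sub_nonneg.mpr (Real.one_le_exp (by norm_num))) zero_le_two

lemma exp_norm_sub_one_sq_le (hz : ‖z‖ = 1) :
    Real.exp (6 * ‖z - 1‖ ^ 2) ≤ 1 + chordSlope * (1 - z.re) := by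
  have hre := abs_le.mp ((Complex.abs_re_le_norm z).trans_eq hz)
  rw [norm_sub_one_sq hz, chordSlope]
  calc Real.exp (6 * (2 - 2 * z.re))
      = Real.exp (((1 + z.re) / 2) • 0 + ((1 - z.re) / 2) • 24) := by
        simp only [smul_eq_mul]
        ring_nf
    _ ≤ ((1 + z.re) / 2) • Real.exp 0 + ((1 - z.re) / 2) • Real.exp 24 :=
        convexOn_exp.2 (mem_univ 0) (mem_univ 24) (by linarith) (by linarith) (by ring)
    _ = 1 + (Real.exp 24 - 1) / 2 * (1 - z.re) := by
        rw [Real.exp_zero, smul_eq_mul, smul_eq_mul]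
        ring

lemma one_add_mul_one_sub_le_rpow {c r : ℝ} (hc : 0 ≤ c) (hr : 0 < r) :
    1 + c * (1 - r) ≤ r ^ (-c) := by
  calc 1 + c * (1 - r) ≤ c * (-Real.log r) + 1 := by
        have := Real.log_le_sub_one_of_pos hr
        nlinarith
    _ ≤ Real.exp (c * (-Real.log r)) := Real.add_one_le_exp _
    _ = r ^ (-c) := by rw [Real.rpow_def_of_pos hr]; ring_nf

lemma exp_neg_arg_mul_I_mul_self (c : ℂ) :
    Complex.exp (-Complex.arg c * Complex.I) * c = ‖c‖ := by
  calc Complex.exp (-Complex.arg c * Complex.I) * c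
      = Complex.exp (-Complex.arg c * Complex.I)
        * (‖c‖ * Complex.exp (Complex.arg c * Complex.I)) := by
        rw [Complex.norm_mul_exp_arg_mul_I]
    _ = ‖c‖ := by
        rw [mul_left_comm, ← Complex.exp_add, neg_mul, neg_add_cancel, Complex.exp_zero, mul_one]

lemma norm_exp_neg_arg_mul_I (c : ℂ) : ‖Complex.exp (-Complex.arg c * Complex.I)‖ = 1 := by
  rw [← Complex.ofReal_neg, Complex.norm_exp_ofReal_mul_I]

lemma norm_exp_neg_arg_mul_I_sub_one_le (c : ℂ) :
    ‖Complex.exp (-Complex.arg c * Complex.I) - 1‖ ≤ 2 * ‖c - 1‖ := by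
  set e := Complex.exp (-Complex.arg c * Complex.I) with he
  calc ‖e - 1‖ = ‖(‖c‖ - 1 : ℂ) - e * (c - 1)‖ := by
        rw [← exp_neg_arg_mul_I_mul_self c, ← he]
        ring_nf
    _ ≤ ‖((‖c‖ - 1 : ℝ) : ℂ)‖ + ‖e * (c - 1)‖ := by
        push_cast
        exact norm_sub_le _ _
    _ ≤ ‖c - 1‖ + ‖c - 1‖ := by
        rw [norm_mul, he, norm_exp_neg_arg_mul_I, one_mul, Complex.norm_real]
        gcongr
        simpa using abs_norm_sub_norm_le c 1
    _ = 2 * ‖c - 1‖ := (two_mul _).symm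

end UnitCircle

section Scheme

variable {Ω : Type*} {m : ℕ → MeasurableSpace Ω} {m0 : MeasurableSpace Ω} {μ : Measure Ω}
  {z : ℕ → Ω → ℂ} {n k : ℕ}

/-- An adapted sequence `z` of unit complex random variables whose first `n` terms are each mean
independent of the past. The running products of such a scheme are a multiplicative martingale
up to normalisation; `z k` is to be thought of as the character of a small increment. -/
structure IsUnimodularScheme (z : ℕ → Ω → ℂ) (m : ℕ → MeasurableSpace Ω)
    {m0 : MeasurableSpace Ω} (μ : Measure Ω) (n : ℕ) : Prop where
  monotone : Monotone m
  le : ∀ k, m k ≤ m0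
  stronglyMeasurable : ∀ k, StronglyMeasurable[m (k + 1)] (z k)
  norm_eq_one : ∀ k ω, ‖z k ω‖ = 1
  meanIndep : ∀ k < n, MeanIndep (z k) (m k) μ

/-- The scheme `z` rotated so that every term has nonnegative real mean `‖∫ z k‖`. -/
def centred (μ : Measure Ω) (z : ℕ → Ω → ℂ) (k : ℕ) (ω : Ω) : ℂ :=
  Complex.exp (-Complex.arg (∫ ω, z k ω ∂μ) * Complex.I) * z k ω

lemma integral_centred (μ : Measure Ω) (z : ℕ → Ω → ℂ) (k : ℕ) :
    ∫ ω, centred μ z k ω ∂μ = ‖∫ ω, z k ω ∂μ‖ := by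
  rw [← exp_neg_arg_mul_I_mul_self]
  exact integral_const_mul _ _

lemma exists_prod_sq_eq_mul_prod_centred_sq (μ : Measure Ω) (z : ℕ → Ω → ℂ)
    (n : ℕ) : ∃ c : ℂ, ‖c‖ = 1 ∧ ∀ ω, (∏ k ∈ Finset.range n, z k ω) ^ 2
      = c * ∏ k ∈ Finset.range n, centred μ z k ω ^ 2 := by
  set e : ℕ → ℂ := fun k => Complex.exp (-Complex.arg (∫ ω, z k ω ∂μ) * Complex.I)
  have he (k : ℕ) : ‖e k‖ = 1 := norm_exp_neg_arg_mul_I _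
  refine ⟨∏ k ∈ Finset.range n, (e k ^ 2)⁻¹, ?_, fun ω => ?_⟩
  · rw [norm_prod]
    exact Finset.prod_eq_one fun k _ => by rw [norm_inv, norm_pow, he, one_pow, inv_one]
  · rw [← Finset.prod_pow, ← Finset.prod_mul_distrib]
    refine Finset.prod_congr rfl fun k _ => ?_
    rw [centred, mul_pow, inv_mul_cancel_left₀ (pow_ne_zero 2 (Complex.exp_ne_zero _))]

namespace IsUnimodularScheme

lemma integrable [IsFiniteMeasure μ] (h : IsUnimodularScheme z m μ n) (k : ℕ) :
    Integrable (z k) μ :=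
  .of_bound ((h.stronglyMeasurable k).mono (h.le _)).aestronglyMeasurable 1
    (.of_forall fun ω => (h.norm_eq_one k ω).le)

protected lemma centred [IsFiniteMeasure μ] (h : IsUnimodularScheme z m μ n) :
    IsUnimodularScheme (centred μ z) m μ n where
  monotone := h.monotone
  le := h.le
  stronglyMeasurable k := (h.stronglyMeasurable k).const_mul _
  norm_eq_one k ω := by rw [centred, norm_mul, norm_exp_neg_arg_mul_I, h.norm_eq_one, one_mul]
  meanIndep k hk := (h.meanIndep k hk).const_mul _ (h.integrable k)

lemma stronglyMeasurable_surrogate (h : IsUnimodularScheme z m μ n) (k : ℕ) :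
    StronglyMeasurable[m (k + 1)] fun ω => surrogate (z k ω) :=
  Continuous.comp_stronglyMeasurable (by unfold surrogate; fun_prop) (h.stronglyMeasurable k)

lemma stronglyMeasurable_chord (h : IsUnimodularScheme z m μ n) (k : ℕ) :
    StronglyMeasurable[m (k + 1)] fun ω => 1 + chordSlope * (1 - (z k ω).re) :=
  Continuous.comp_stronglyMeasurable (g := fun w : ℂ => 1 + chordSlope * (1 - w.re))
    (by fun_prop) (h.stronglyMeasurable k)

lemma norm_chord_le (h : IsUnimodularScheme z m μ n) (k : ℕ) (ω : Ω) :
    ‖1 + chordSlope * (1 - (z k ω).re)‖ ≤ 1 + chordSlope * 2 := by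
  have hre := abs_le.mp ((Complex.abs_re_le_norm (z k ω)).trans_eq (h.norm_eq_one k ω))
  rw [Real.norm_of_nonneg (by nlinarith [chordSlope_nonneg])]
  nlinarith [chordSlope_nonneg]

variable [IsProbabilityMeasure μ]

lemma integral_prod (h : IsUnimodularScheme z m μ n) :
    ∫ ω, ∏ k ∈ Finset.range n, z k ω ∂μ = ∏ k ∈ Finset.range n, ∫ ω, z k ω ∂μ :=
  MeanIndep.integral_prod h.monotone h.le h.stronglyMeasurable
    (fun k ω => (h.norm_eq_one k ω).le) h.meanIndep

lemma meanIndep_surrogate (h : IsUnimodularScheme z m μ n) (hk : k < n) :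
    MeanIndep (fun ω => surrogate (z k ω)) (m k) μ := by
  have hi := h.integrable k
  have h3 : MeanIndep (fun ω => 3 * z k ω + -3) (m k) μ :=
    ((h.meanIndep k hk).const_mul 3 hi).add (.const (h.le k) (-3)) (hi.const_mul 3)
      (integrable_const _)
  exact h3.add ((h.meanIndep k hk).conj hi) ((hi.const_mul 3).add (integrable_const _))
    (RCLike.conjCLE.integrable_comp_iff.mpr hi)

lemma integrable_prod_surrogate (h : IsUnimodularScheme z m μ n) :
    Integrable (fun ω => ∏ k ∈ Finset.range n, surrogate (z k ω)) μ :=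
  integrable_prod_of_norm_le (fun k => (h.stronglyMeasurable_surrogate k).mono (h.le _))
    (fun k ω => norm_surrogate_le (h.norm_eq_one k ω)) n

lemma meanIndep_prod_surrogate (h : IsUnimodularScheme z m μ n) :
    MeanIndep (fun ω => ∏ k ∈ Finset.range n, surrogate (z k ω)) (m 0) μ :=
  MeanIndep.prod h.monotone h.le h.stronglyMeasurable_surrogate
    (fun k ω => norm_surrogate_le (h.norm_eq_one k ω)) fun _ hk => h.meanIndep_surrogate hk

lemma integrable_exp_sum_norm_sub_one_sq (h : IsUnimodularScheme z m μ n) :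
    Integrable (fun ω => Real.exp (6 * ∑ k ∈ Finset.range n, ‖z k ω - 1‖ ^ 2)) μ := by
  have hzm (k : ℕ) : StronglyMeasurable[m0] (z k) := (h.stronglyMeasurable k).mono (h.le _)
  refine .of_bound (C := Real.exp (6 * ∑ _k ∈ Finset.range n, 2 ^ 2)) ?_ (.of_forall fun ω => ?_)
  · have hsum : StronglyMeasurable[m0] fun ω => ∑ k ∈ Finset.range n, ‖z k ω - 1‖ ^ 2 :=
      Finset.stronglyMeasurable_fun_sum _ fun k _ =>
        ((hzm k).sub stronglyMeasurable_const).norm.pow 2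
    exact (Real.continuous_exp.comp_stronglyMeasurable (hsum.const_mul 6)).aestronglyMeasurable
  · rw [Real.norm_of_nonneg (Real.exp_nonneg _)]
    gcongr with k
    exact norm_sub_one_le_two (h.norm_eq_one k ω)

lemma meanIndep_chord (h : IsUnimodularScheme z m μ n) (hk : k < n) :
    MeanIndep (fun ω => 1 + chordSlope * (1 - (z k ω).re)) (m k) μ := by
  have hre : Integrable (fun ω => -chordSlope * (z k ω).re) μ := (h.integrable k).re.const_mul _
  have h' : MeanIndep (fun ω => (z k ω).re) (m k) μ :=
    (h.meanIndep k hk).clm_comp Complex.reCLM (h.integrable k)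
  convert (MeanIndep.const (μ := μ) (h.le k) (1 + chordSlope)).add
    (h'.const_mul (-chordSlope) (h.integrable k).re) (integrable_const _) hre using 2
  ring

lemma integral_chord (h : IsUnimodularScheme z m μ n) (k : ℕ) :
    ∫ ω, (1 + chordSlope * (1 - (z k ω).re)) ∂μ
      = 1 + chordSlope * (1 - (∫ ω, z k ω ∂μ).re) := by
  have hre : Integrable (fun ω => (z k ω).re) μ := (h.integrable k).re
  have hsub : Integrable (fun ω => 1 - (z k ω).re) μ := (integrable_const _).sub hre
  have h_int : ∫ ω, (z k ω).re ∂μ = (∫ ω, z k ω ∂μ).re :=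
    Complex.reCLM.integral_comp_comm (h.integrable k)
  rw [integral_add (integrable_const _) (hsub.const_mul _), integral_const_mul,
    integral_sub (integrable_const _) hre, h_int]
  simp only [integral_const, probReal_univ, one_smul]

lemma integral_exp_sum_norm_sub_one_sq_le (h : IsUnimodularScheme z m μ n)
    (hz : ∀ k < n, 0 < (∫ ω, z k ω ∂μ).re) :
    ∫ ω, Real.exp (6 * ∑ k ∈ Finset.range n, ‖z k ω - 1‖ ^ 2) ∂μ
      ≤ (∏ k ∈ Finset.range n, (∫ ω, z k ω ∂μ).re) ^ (-chordSlope) := by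
  calc ∫ ω, Real.exp (6 * ∑ k ∈ Finset.range n, ‖z k ω - 1‖ ^ 2) ∂μ
      ≤ ∫ ω, ∏ k ∈ Finset.range n, (1 + chordSlope * (1 - (z k ω).re)) ∂μ := by
        refine integral_mono h.integrable_exp_sum_norm_sub_one_sq (integrable_prod_of_norm_le
          (fun k => (h.stronglyMeasurable_chord k).mono (h.le _)) h.norm_chord_le n) fun ω => ?_
        simp only [Finset.mul_sum, Real.exp_sum]
        exact Finset.prod_le_prod (fun _ _ => Real.exp_nonneg _)
          fun k _ => exp_norm_sub_one_sq_le (h.norm_eq_one k ω)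
    _ = ∏ k ∈ Finset.range n, (1 + chordSlope * (1 - (∫ ω, z k ω ∂μ).re)) := by
        rw [MeanIndep.integral_prod h.monotone h.le h.stronglyMeasurable_chord h.norm_chord_le
          fun _ hk => h.meanIndep_chord hk]
        exact Finset.prod_congr rfl fun k _ => h.integral_chord k
    _ ≤ ∏ k ∈ Finset.range n, (∫ ω, z k ω ∂μ).re ^ (-chordSlope) := by
        refine Finset.prod_le_prod (fun k _ => ?_) fun k hk =>
          one_add_mul_one_sub_le_rpow chordSlope_nonneg (hz k (Finset.mem_range.mp hk))
        rw [← h.integral_chord]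
        exact integral_nonneg fun ω => (Real.exp_nonneg _).trans
          (exp_norm_sub_one_sq_le (h.norm_eq_one k ω))
    _ = (∏ k ∈ Finset.range n, (∫ ω, z k ω ∂μ).re) ^ (-chordSlope) :=
        Real.finsetProd_rpow _ _ (fun k hk => (hz k (Finset.mem_range.mp hk)).le) _

lemma norm_integral_prod (h : IsUnimodularScheme z m μ n) :
    ‖∫ ω, ∏ k ∈ Finset.range n, z k ω ∂μ‖
      = ∏ k ∈ Finset.range n, (∫ ω, centred μ z k ω ∂μ).re := by
  rw [h.integral_prod, norm_prod]
  exact Finset.prod_congr rfl fun k _ => by rw [integral_centred, Complex.ofReal_re]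

lemma norm_integral_sub_one_le (h : IsUnimodularScheme z m μ n) {M : Ω → ℝ}
    (hM : Integrable M μ) (hzM : ∀ ω, ‖z k ω - 1‖ ≤ M ω) :
    ‖∫ ω, z k ω ∂μ - 1‖ ≤ ∫ ω, M ω ∂μ := by
  calc ‖∫ ω, z k ω ∂μ - 1‖ = ‖∫ ω, (z k ω - 1) ∂μ‖ := by
        rw [integral_sub (h.integrable k) (integrable_const _), integral_const, probReal_univ,
          one_smul]
    _ ≤ ∫ ω, M ω ∂μ := norm_integral_le_of_norm_le hM (.of_forall hzM)

lemma norm_centred_sub_one_le (h : IsUnimodularScheme z m μ n) {M : Ω → ℝ}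
    (hM : Integrable M μ) (hzM : ∀ ω, ‖z k ω - 1‖ ≤ M ω) (ω : Ω) :
    ‖centred μ z k ω - 1‖ ≤ M ω + 2 * ∫ ω, M ω ∂μ := by
  set c := ∫ ω, z k ω ∂μ
  set e := Complex.exp (-Complex.arg c * Complex.I)
  calc ‖e * z k ω - 1‖ = ‖e * (z k ω - 1) + (e - 1)‖ := by ring_nf
    _ ≤ ‖e * (z k ω - 1)‖ + ‖e - 1‖ := norm_add_le _ _
    _ ≤ M ω + 2 * ∫ ω, M ω ∂μ := by
        rw [norm_mul, norm_exp_neg_arg_mul_I, one_mul]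
        refine add_le_add (hzM ω) ((norm_exp_neg_arg_mul_I_sub_one_le c).trans ?_)
        exact mul_le_mul_of_nonneg_left (h.norm_integral_sub_one_le hM hzM) zero_le_two

lemma integral_norm_prod_surrogate_sub_prod_sq_le (h : IsUnimodularScheme z m μ n)
    (hz : ∀ k < n, 0 < (∫ ω, z k ω ∂μ).re) {δ : Ω → ℝ} (hδ : MemLp δ 2 μ) (hδ₀ : 0 ≤ δ)
    (hzδ : ∀ k < n, ∀ ω, ‖z k ω - 1‖ ≤ δ ω) {a : ℝ} (ha : 0 < a) :
    ∫ ω, ‖∏ k ∈ Finset.range n, surrogate (z k ω) - ∏ k ∈ Finset.range n, z k ω ^ 2‖ ∂μ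
      ≤ a * ∫ ω, δ ω ^ 2 ∂μ
        + a⁻¹ * (∏ k ∈ Finset.range n, (∫ ω, z k ω ∂μ).re) ^ (-chordSlope) := by
  set S : Ω → ℝ := fun ω => ∑ k ∈ Finset.range n, ‖z k ω - 1‖ ^ 2
  have hδi : Integrable (fun ω => a * δ ω ^ 2) μ := hδ.integrable_sq.const_mul a
  have hSi : Integrable (fun ω => a⁻¹ * Real.exp (6 * S ω)) μ :=
    h.integrable_exp_sum_norm_sub_one_sq.const_mul _
  calc ∫ ω, ‖∏ k ∈ Finset.range n, surrogate (z k ω) - ∏ k ∈ Finset.range n, z k ω ^ 2‖ ∂μ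
      ≤ ∫ ω, (a * δ ω ^ 2 + a⁻¹ * Real.exp (6 * S ω)) ∂μ := by
        refine integral_mono_of_nonneg (.of_forall fun ω => norm_nonneg _) (hδi.add hSi)
          (.of_forall fun ω => ?_)
        calc ‖∏ k ∈ Finset.range n, surrogate (z k ω) - ∏ k ∈ Finset.range n, z k ω ^ 2‖
            ≤ δ ω * Real.exp (3 * S ω) := norm_prod_surrogate_sub_prod_sq_le _
              (fun k _ => h.norm_eq_one k ω) (hδ₀ ω)
              fun k hk => hzδ k (Finset.mem_range.mp hk) ω
          _ ≤ a * δ ω ^ 2 + a⁻¹ * Real.exp (3 * S ω) ^ 2 := by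
              refine le_trans ?_ (two_mul_le_add_mul_sq ha)
              linarith [mul_nonneg (hδ₀ ω) (Real.exp_nonneg (3 * S ω))]
          _ = a * δ ω ^ 2 + a⁻¹ * Real.exp (6 * S ω) := by
              rw [← Real.exp_nat_mul]
              ring_nf
    _ ≤ _ := by
        rw [integral_add hδi hSi, integral_const_mul, integral_const_mul]
        gcongr
        exact h.integral_exp_sum_norm_sub_one_sq_le hz

lemma exists_meanIndep_integral_norm_prod_sq_sub_le (h : IsUnimodularScheme z m μ n)
    (hz : ∫ ω, ∏ k ∈ Finset.range n, z k ω ∂μ ≠ 0) {M : Ω → ℝ} (hM : MemLp M 2 μ)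
    (hM₀ : 0 ≤ M) (hzM : ∀ k < n, ∀ ω, ‖z k ω - 1‖ ≤ M ω) {a : ℝ} (ha : 0 < a) :
    ∃ g : Ω → ℂ, Integrable g μ ∧ MeanIndep g (m 0) μ ∧
      ∫ ω, ‖(∏ k ∈ Finset.range n, z k ω) ^ 2 - g ω‖ ∂μ
        ≤ a * ∫ ω, (M ω + 2 * ∫ ω, M ω ∂μ) ^ 2 ∂μ
          + a⁻¹ * ‖∫ ω, ∏ k ∈ Finset.range n, z k ω ∂μ‖ ^ (-chordSlope) := by
  obtain ⟨c, hc, hsq⟩ := exists_prod_sq_eq_mul_prod_centred_sq μ z n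
  have hMi : Integrable M μ := hM.integrable one_le_two
  have hne : ∀ k < n, ∫ ω, z k ω ∂μ ≠ 0 := fun k hk =>
    Finset.prod_ne_zero_iff.mp (h.integral_prod ▸ hz) k (Finset.mem_range.mpr hk)
  have hpos : ∀ k < n, 0 < (∫ ω, centred μ z k ω ∂μ).re := fun k hk => by
    rw [integral_centred, Complex.ofReal_re]
    exact norm_pos_iff.mpr (hne k hk)
  refine ⟨fun ω => c * ∏ k ∈ Finset.range n, surrogate (centred μ z k ω),
    h.centred.integrable_prod_surrogate.const_mul c,
    h.centred.meanIndep_prod_surrogate.const_mul c h.centred.integrable_prod_surrogate, ?_⟩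
  calc ∫ ω, ‖(∏ k ∈ Finset.range n, z k ω) ^ 2
        - c * ∏ k ∈ Finset.range n, surrogate (centred μ z k ω)‖ ∂μ
      = ∫ ω, ‖∏ k ∈ Finset.range n, surrogate (centred μ z k ω)
          - ∏ k ∈ Finset.range n, centred μ z k ω ^ 2‖ ∂μ := by
        refine integral_congr_ae (.of_forall fun ω => ?_)
        dsimp only
        rw [hsq, ← mul_sub, norm_mul, hc, one_mul, norm_sub_rev]
    _ ≤ _ := by
        rw [h.norm_integral_prod]
        refine h.centred.integral_norm_prod_surrogate_sub_prod_sq_le hpos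
          (hM.add (memLp_const _)) (fun ω => ?_)
          (fun k hk => h.norm_centred_sub_one_le hMi (hzM k hk)) ha
        exact add_nonneg (hM₀ ω) (mul_nonneg zero_le_two (integral_nonneg hM₀))

end IsUnimodularScheme

end Scheme

section PastIncrements

variable {ι Ω : Type*} [Preorder ι] {m0 : MeasurableSpace Ω} {ε : ι → Ω → ℝ} {s t : ι}

/-- The σ-algebra `σ(ε_s - ε_t : s ≤ t)` generated by the increments of `ε` up to time `t`, all
measured backwards from time `t`. -/
abbrev pastIncrements (ε : ι → Ω → ℝ) (t : ι) : MeasurableSpace Ω :=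
  ⨆ s ∈ Iic t, MeasurableSpace.comap (fun ω => ε s ω - ε t ω) inferInstance

lemma measurable_pastIncrements_sub (ε : ι → Ω → ℝ) (hst : s ≤ t) :
    Measurable[pastIncrements ε t] fun ω => ε s ω - ε t ω :=
  measurable_iff_comap_le.mpr
    (le_iSup₂_of_le (f := fun s (_ : s ∈ Iic t) => MeasurableSpace.comap
      (fun ω => ε s ω - ε t ω) inferInstance) s hst le_rfl)

lemma pastIncrements_le (hε : ∀ s, Measurable (ε s)) (t : ι) : pastIncrements ε t ≤ m0 :=
  iSup₂_le fun s _ => ((hε s).sub (hε t)).comap_le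

lemma monotone_pastIncrements (ε : ι → Ω → ℝ) : Monotone (pastIncrements ε) := by
  refine fun s t hst => iSup₂_le fun r hr => measurable_iff_comap_le.mp ?_
  convert (measurable_pastIncrements_sub ε (le_trans hr hst)).sub
    (measurable_pastIncrements_sub ε hst) using 2
  rw [Pi.sub_apply, sub_sub_sub_cancel_right]

end PastIncrements

section Character

variable {Ω : Type*} {m m0 : MeasurableSpace Ω} {μ : Measure Ω} {X Y : Ω → ℝ} {v : ℝ}

/-- The character `exp (i v X)` of frequency `v` of a real random variable `X`. Its mean is the
characteristic function of `X` at `v`. -/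
def character (v : ℝ) (X : Ω → ℝ) (ω : Ω) : ℂ := Complex.exp ((v * X ω : ℝ) * Complex.I)

lemma norm_character (v : ℝ) (X : Ω → ℝ) (ω : Ω) : ‖character v X ω‖ = 1 :=
  Complex.norm_exp_ofReal_mul_I _

lemma stronglyMeasurable_character (v : ℝ) (hX : Measurable[m] X) :
    StronglyMeasurable[m] (character v X) :=
  Continuous.comp_stronglyMeasurable
    (g := fun x : ℝ => Complex.exp ((v * x : ℝ) * Complex.I)) (by fun_prop) hX.stronglyMeasurable

lemma integrable_character [IsFiniteMeasure μ] (v : ℝ) (hX : Measurable X) :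
    Integrable (character v X) μ :=
  .of_bound (stronglyMeasurable_character v hX).aestronglyMeasurable 1
    (.of_forall fun ω => (norm_character v X ω).le)

lemma character_two_mul (v : ℝ) (X : Ω → ℝ) (ω : Ω) :
    character (2 * v) X ω = character v X ω ^ 2 := by
  rw [character, character, ← Complex.exp_nat_mul]
  push_cast
  ring_nf

lemma character_sub_mul_character (v : ℝ) (X Y : Ω → ℝ) (ω : Ω) :
    character v (fun ω => X ω - Y ω) ω * character v Y ω = character v X ω := by
  rw [character, character, character, ← Complex.exp_add, ← add_mul, ← Complex.ofReal_add,
    ← mul_add, sub_add_cancel]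

lemma integral_character (v : ℝ) (hX : Measurable X) :
    ∫ ω, character v X ω ∂μ = charFun (μ.map X) v := by
  rw [charFun_apply_real, integral_map hX.aemeasurable (by fun_prop)]
  simp only [character, Complex.ofReal_mul]

end Character

section Phase

variable {ι Ω : Type*} {ε : ι → Ω → ℝ}

/-- The character of frequency `v` of the increment `ε_s - ε_{s'}`. -/
def phase (ε : ι → Ω → ℝ) (v : ℝ) (s s' : ι) : Ω → ℂ := character v fun ω => ε s ω - ε s' ω

lemma norm_phase (ε : ι → Ω → ℝ) (v : ℝ) (s s' : ι) (ω : Ω) : ‖phase ε v s s' ω‖ = 1 :=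
  norm_character _ _ _

lemma phase_two_mul (ε : ι → Ω → ℝ) (v : ℝ) (s s' : ι) (ω : Ω) :
    phase ε (2 * v) s s' ω = phase ε v s s' ω ^ 2 :=
  character_two_mul _ _ _

lemma prod_phase (ε : ι → Ω → ℝ) (v : ℝ) (p : ℕ → ι) (n : ℕ) (ω : Ω) :
    ∏ k ∈ Finset.range n, phase ε v (p k) (p (k + 1)) ω = phase ε v (p 0) (p n) ω := by
  simp only [phase, character, ← Complex.exp_sum, ← Finset.sum_mul, ← Complex.ofReal_sum,
    ← Finset.mul_sum, Finset.sum_range_sub']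

lemma norm_phase_sub_one_le (ε : ι → Ω → ℝ) (v : ℝ) (s s' : ι) (ω : Ω) :
    ‖phase ε v s s' ω - 1‖ ≤ dist (v * ε s ω) (v * ε s' ω) := by
  rw [phase, character, mul_comm, Real.dist_eq, ← mul_sub, ← Real.norm_eq_abs]
  exact Real.norm_exp_I_mul_ofReal_sub_one_le

lemma stronglyMeasurable_phase [Preorder ι] (ε : ι → Ω → ℝ) (v : ℝ) {s s' : ι} (h : s ≤ s') :
    StronglyMeasurable[pastIncrements ε s'] (phase ε v s s') :=
  stronglyMeasurable_character v (measurable_pastIncrements_sub ε h)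

lemma integrable_phase [MeasurableSpace Ω] {μ : Measure Ω} [IsFiniteMeasure μ]
    (hε : ∀ s, Measurable (ε s)) (v : ℝ) (s s' : ι) : Integrable (phase ε v s s') μ :=
  integrable_character v ((hε s).sub (hε s'))

end Phase

section Grid

variable {s s' : ℝ≥0} {n k : ℕ}

/-- The points of the uniform subdivision of `[s, s']` into `n` intervals (for `k ≤ n`; the
definition continues the arithmetic progression beyond `s'`). -/
def gridPoint (s s' : ℝ≥0) (n k : ℕ) : ℝ≥0 := s + k / n * (s' - s)

lemma monotone_gridPoint (s s' : ℝ≥0) (n : ℕ) : Monotone (gridPoint s s' n) := fun k l hkl => by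
  unfold gridPoint
  gcongr

lemma gridPoint_zero (s s' : ℝ≥0) (n : ℕ) : gridPoint s s' n 0 = s := by simp [gridPoint]

lemma gridPoint_self (h : s ≤ s') (hn : n ≠ 0) : gridPoint s s' n n = s' := by
  rw [gridPoint, div_self (Nat.cast_ne_zero.mpr hn), one_mul, add_tsub_cancel_of_le h]

lemma gridPoint_mem_Icc (h : s ≤ s') (hn : n ≠ 0) (hk : k ≤ n) :
    gridPoint s s' n k ∈ Icc s s' :=
  ⟨(gridPoint_zero s s' n).ge.trans (monotone_gridPoint s s' n k.zero_le),
    (monotone_gridPoint s s' n hk).trans_eq (gridPoint_self h hn)⟩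

lemma dist_gridPoint_succ (s s' : ℝ≥0) (n k : ℕ) :
    dist (gridPoint s s' n k) (gridPoint s s' n (k + 1)) = (s' - s : ℝ≥0) / n := by
  rw [dist_comm, NNReal.dist_eq]
  simp only [gridPoint]
  push_cast
  rw [abs_of_nonneg]
  · ring
  · ring_nf
    positivity

lemma prod_phase_gridPoint {Ω : Type*} (ε : ℝ≥0 → Ω → ℝ) (v : ℝ) (h : s ≤ s') (hn : n ≠ 0)
    (ω : Ω) :
    ∏ k ∈ Finset.range n, phase ε v (gridPoint s s' n k) (gridPoint s s' n (k + 1)) ω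
      = phase ε v s s' ω := by
  rw [prod_phase, gridPoint_zero, gridPoint_self h hn]

end Grid

section GridDeviation

open Filter Topology

variable {Ω : Type*} {m0 : MeasurableSpace Ω} {ε : ℝ≥0 → Ω → ℝ} {v : ℝ} {s s' : ℝ≥0} {n k : ℕ}

/-- The largest deviation from `1` of the phases of the `n` consecutive increments of `ε` over
the uniform subdivision of `[s, s']`. -/
def gridDeviation (ε : ℝ≥0 → Ω → ℝ) (v : ℝ) (s s' : ℝ≥0) (n : ℕ) (ω : Ω) : ℝ≥0 :=
  (Finset.range n).sup fun k =>
    ‖phase ε v (gridPoint s s' n k) (gridPoint s s' n (k + 1)) ω - 1‖₊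

lemma norm_phase_sub_one_le_gridDeviation (ε : ℝ≥0 → Ω → ℝ) (v : ℝ) (s s' : ℝ≥0) (hk : k < n)
    (ω : Ω) : ‖phase ε v (gridPoint s s' n k) (gridPoint s s' n (k + 1)) ω - 1‖
      ≤ gridDeviation ε v s s' n ω :=
  NNReal.coe_le_coe.mpr (Finset.le_sup (f := fun k =>
    ‖phase ε v (gridPoint s s' n k) (gridPoint s s' n (k + 1)) ω - 1‖₊) (Finset.mem_range.mpr hk))

lemma gridDeviation_le_two (ε : ℝ≥0 → Ω → ℝ) (v : ℝ) (s s' : ℝ≥0) (n : ℕ) (ω : Ω) :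
    gridDeviation ε v s s' n ω ≤ 2 :=
  Finset.sup_le fun _ _ => norm_sub_one_le_two (norm_phase _ _ _ _ _)

lemma measurable_gridDeviation (hε : ∀ s, Measurable (ε s)) (v : ℝ) (s s' : ℝ≥0) (n : ℕ) :
    Measurable (gridDeviation ε v s s' n) := by
  have h (k : ℕ) : Measurable fun ω =>
      ‖phase ε v (gridPoint s s' n k) (gridPoint s s' n (k + 1)) ω - 1‖₊ :=
    (((stronglyMeasurable_phase ε v (monotone_gridPoint s s' n k.le_succ)).mono
      (pastIncrements_le hε _)).measurable.sub_const 1).nnnorm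
  convert Finset.sup_induction (s := Finset.range n) (p := Measurable) measurable_const
    (fun _ hf _ hg => hf.sup hg) fun k _ => h k using 1
  ext1 ω
  rw [gridDeviation, Finset.sup_apply]

lemma tendsto_gridDeviation (v : ℝ) (h : s ≤ s') {ω : Ω} (hε : Continuous fun r => ε r ω) :
    Tendsto (fun n => (gridDeviation ε v s s' n ω : ℝ)) atTop (𝓝 0) := by
  have huc : UniformContinuousOn (fun r => v * ε r ω) (Icc s s') :=
    isCompact_Icc.uniformContinuousOn_of_continuous (hε.const_mul v).continuousOn
  refine tendsto_order.mpr ⟨fun a ha => .of_forall fun n => ha.trans_le (NNReal.coe_nonneg _),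
    fun η hη => ?_⟩
  obtain ⟨δ, hδ, hεδ⟩ := Metric.uniformContinuousOn_iff.mp huc η hη
  have hmesh : ∀ᶠ n : ℕ in atTop, (s' - s : ℝ≥0) / (n : ℝ) < δ :=
    (tendsto_const_div_atTop_nhds_zero_nat _).eventually_lt_const hδ
  lift η to ℝ≥0 using hη.le
  filter_upwards [hmesh, eventually_ne_atTop 0] with n hnδ hn
  refine NNReal.coe_lt_coe.mpr ((Finset.sup_lt_iff (NNReal.coe_pos.mp hη)).mpr fun k hk => ?_)
  have hk : k < n := Finset.mem_range.mp hk
  exact (norm_phase_sub_one_le ε v _ _ ω).trans_lt (hεδ _ (gridPoint_mem_Icc h hn hk.le) _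
    (gridPoint_mem_Icc h hn hk) ((dist_gridPoint_succ s s' n k).trans_lt hnδ))

variable {μ : Measure Ω} [IsProbabilityMeasure μ]

lemma memLp_gridDeviation (hε : ∀ s, Measurable (ε s)) (v : ℝ) (s s' : ℝ≥0) (n : ℕ) :
    MemLp (fun ω => (gridDeviation ε v s s' n ω : ℝ)) 2 μ :=
  .of_bound (measurable_gridDeviation hε v s s' n).coe_nnreal_real.aestronglyMeasurable 2
    (.of_forall fun ω => by
      rw [Real.norm_of_nonneg (NNReal.coe_nonneg _)]
      exact gridDeviation_le_two ε v s s' n ω)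

lemma tendsto_integral_gridDeviation (hε : ∀ s, Measurable (ε s))
    (hε_cont : ∀ ω, Continuous fun s => ε s ω) (v : ℝ) (h : s ≤ s') :
    Tendsto (fun n => ∫ ω, (gridDeviation ε v s s' n ω : ℝ) ∂μ) atTop (𝓝 0) := by
  rw [← integral_zero Ω ℝ (μ := μ)]
  refine tendsto_integral_of_dominated_convergence (fun _ => 2)
    (fun n => (memLp_gridDeviation hε v s s' n).aestronglyMeasurable) (integrable_const _)
    (fun n => .of_forall fun ω => ?_) (.of_forall fun ω => tendsto_gridDeviation v h (hε_cont ω))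
  rw [Real.norm_of_nonneg (NNReal.coe_nonneg _)]
  exact gridDeviation_le_two ε v s s' n ω

lemma tendsto_integral_gridDeviation_add_sq (hε : ∀ s, Measurable (ε s))
    (hε_cont : ∀ ω, Continuous fun s => ε s ω) (v : ℝ) (h : s ≤ s') :
    Tendsto (fun n => ∫ ω, (gridDeviation ε v s s' n ω
      + 2 * ∫ ω, (gridDeviation ε v s s' n ω : ℝ) ∂μ) ^ 2 ∂μ) atTop (𝓝 0) := by
  have hle (n : ℕ) (ω : Ω) : (gridDeviation ε v s s' n ω : ℝ) ≤ 2 :=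
    gridDeviation_le_two ε v s s' n ω
  have hint_nonneg (n : ℕ) : 0 ≤ ∫ ω, (gridDeviation ε v s s' n ω : ℝ) ∂μ :=
    integral_nonneg fun _ => NNReal.coe_nonneg _
  have hint_le (n : ℕ) : ∫ ω, (gridDeviation ε v s s' n ω : ℝ) ∂μ ≤ 2 := by
    have hi := (memLp_gridDeviation (μ := μ) hε v s s' n).integrable one_le_two
    simpa using integral_mono hi (integrable_const 2) (hle n)
  rw [← integral_zero Ω ℝ (μ := μ)]
  refine tendsto_integral_of_dominated_convergence (fun _ => 6 ^ 2)
    (fun n => ((memLp_gridDeviation hε v s s' n).aestronglyMeasurable.add_const _).pow 2)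
    (integrable_const _) (fun n => .of_forall fun ω => ?_) (.of_forall fun ω => ?_)
  · rw [Real.norm_of_nonneg (sq_nonneg _)]
    have : 0 ≤ (gridDeviation ε v s s' n ω : ℝ) := NNReal.coe_nonneg _
    exact pow_le_pow_left₀ (by linarith [hint_nonneg n]) (by linarith [hle n ω, hint_le n]) 2
  · simpa using ((tendsto_gridDeviation v h (hε_cont ω)).add
      ((tendsto_integral_gridDeviation (μ := μ) hε hε_cont v h).const_mul 2)).pow 2

end GridDeviation

section FactorsAt

open Filter

variable {Ω : Type*} {m0 : MeasurableSpace Ω} {μ : Measure Ω} {ε : ℝ≥0 → Ω → ℝ} {v : ℝ}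
  {θ s s' : ℝ≥0}

/-- Over `[0, θ]`, the character of frequency `v` of every increment of `ε` is mean independent
of the earlier increments: the characteristic function of the increments factorises at `v`. -/
def FactorsAt (μ : Measure Ω) (ε : ℝ≥0 → Ω → ℝ) (v : ℝ) (θ : ℝ≥0) : Prop :=
  ∀ s s', s ≤ s' → s' ≤ θ → MeanIndep (phase ε v s s') (pastIncrements ε s) μ

namespace FactorsAt

lemma isUnimodularScheme (hv : FactorsAt μ ε v θ) (hε : ∀ s, Measurable (ε s)) (hs : s ≤ s')
    (hs' : s' ≤ θ) (n : ℕ) :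
    IsUnimodularScheme (fun k => phase ε v (gridPoint s s' n k) (gridPoint s s' n (k + 1)))
      (fun k => pastIncrements ε (gridPoint s s' n k)) μ n where
  monotone := (monotone_pastIncrements ε).comp (monotone_gridPoint s s' n)
  le k := pastIncrements_le hε _
  stronglyMeasurable k := stronglyMeasurable_phase ε v (monotone_gridPoint s s' n k.le_succ)
  norm_eq_one k := norm_phase ε v _ _
  meanIndep k hk := hv _ _ (monotone_gridPoint s s' n k.le_succ)
    ((gridPoint_mem_Icc hs (by omega) hk).2.trans hs')

variable [IsProbabilityMeasure μ]

lemma integral_phase_ne_zero (hv : FactorsAt μ ε v θ) (hε : ∀ s, Measurable (ε s))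
    (hε_cont : ∀ ω, Continuous fun s => ε s ω) (hs : s ≤ s') (hs' : s' ≤ θ) :
    ∫ ω, phase ε v s s' ω ∂μ ≠ 0 := by
  obtain ⟨n, hn_lt, hn⟩ := (((tendsto_integral_gridDeviation (μ := μ) hε hε_cont v
    hs).eventually_lt_const one_pos).and (eventually_ne_atTop 0)).exists
  have h := hv.isUnimodularScheme hε hs hs' n
  simp only [← prod_phase_gridPoint ε v hs hn]
  rw [h.integral_prod]
  refine Finset.prod_ne_zero_iff.mpr fun k hk hzero => hn_lt.not_ge ?_
  have hle := h.norm_integral_sub_one_le ((memLp_gridDeviation hε v s s' n).integrable one_le_two)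
    (norm_phase_sub_one_le_gridDeviation ε v s s' (Finset.mem_range.mp hk))
  rwa [hzero, zero_sub, norm_neg, norm_one] at hle

lemma two_mul (hv : FactorsAt μ ε v θ) (hε : ∀ s, Measurable (ε s))
    (hε_cont : ∀ ω, Continuous fun s => ε s ω) : FactorsAt μ ε (2 * v) θ := by
  intro s s' hs hs'
  refine .of_forall_exists_integral_norm_sub_le (pastIncrements_le hε s)
    (integrable_phase hε _ _ _) fun η hη => ?_
  have hne := hv.integral_phase_ne_zero hε hε_cont hs hs'
  set K := ‖∫ ω, phase ε v s s' ω ∂μ‖ ^ (-chordSlope)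
  have hK : 0 < K := Real.rpow_pos_of_pos (norm_pos_iff.mpr hne) _
  set a := 2 * K / η with ha
  have ha_pos : 0 < a := by positivity
  obtain ⟨n, hn_lt, hn⟩ := (((tendsto_integral_gridDeviation_add_sq (μ := μ) hε hε_cont v
    hs).eventually_lt_const (show 0 < η / (2 * a) by positivity)).and
    (eventually_ne_atTop 0)).exists
  have hprod (ω : Ω) := prod_phase_gridPoint ε v hs hn ω
  have h := (hv.isUnimodularScheme hε hs hs' n).exists_meanIndep_integral_norm_prod_sq_sub_le
    (by simpa only [hprod] using hne) (memLp_gridDeviation hε v s s' n)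
    (fun _ => NNReal.coe_nonneg _)
    (fun k hk => norm_phase_sub_one_le_gridDeviation ε v s s' hk) ha_pos
  simp only [hprod, gridPoint_zero, ← phase_two_mul] at h
  obtain ⟨g, hgi, hg, hle⟩ := h
  refine ⟨g, hgi, hg, hle.trans ?_⟩
  calc _ ≤ a * (η / (2 * a)) + a⁻¹ * K := by gcongr
    _ = η := by
        rw [ha]
        field_simp
        ring

lemma two_pow_mul (hv : FactorsAt μ ε v θ) (hε : ∀ s, Measurable (ε s))
    (hε_cont : ∀ ω, Continuous fun s => ε s ω) (n : ℕ) : FactorsAt μ ε (2 ^ n * v) θ := by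
  induction n with
  | zero => rwa [pow_zero, one_mul]
  | succ n ih =>
    rw [pow_succ', mul_assoc]
    exact ih.two_mul hε hε_cont

end FactorsAt

end FactorsAt

section Frequencies

open Filter Topology

variable {Ω : Type*} {m0 : MeasurableSpace Ω} {μ : Measure Ω} [IsProbabilityMeasure μ]
  {ε : ℝ≥0 → Ω → ℝ} {v : ℝ} {θ : ℝ≥0}

lemma FactorsAt.of_integral_character_ne_zero (hε : ∀ s, Measurable (ε s))
    (hback : ∀ s, Indep (pastIncrements ε s) (MeasurableSpace.comap (ε s) inferInstance) μ)
    (hne : ∀ s ≤ θ, ∫ ω, character v (ε s) ω ∂μ ≠ 0) : FactorsAt μ ε v θ := by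
  intro s s' hs hs'
  have hG (r : ℝ≥0) : pastIncrements ε r ≤ m0 := pastIncrements_le hε r
  have hchar (r : ℝ≥0) : MeanIndep (character v (ε r)) (pastIncrements ε r) μ :=
    .of_indep (hG r) (hε r).comap_le (stronglyMeasurable_character v (comap_measurable _))
      (hback r).symm
  have hfactor := (hchar s').condExp_mul (monotone_pastIncrements ε hs) (hG s')
    (stronglyMeasurable_phase ε v hs) (integrable_character v (hε s'))
    (by simpa only [phase, character_sub_mul_character] using integrable_character v (hε s))
  simp only [phase, character_sub_mul_character] at hfactor
  refine .of_condExp_ae_eq_const (hG s)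
    (c := (∫ ω, character v (ε s) ω ∂μ) / ∫ ω, character v (ε s') ω ∂μ) ?_
  filter_upwards [hfactor, hchar s] with ω hω hω'
  rw [eq_div_iff (hne s' hs'), ← hω', hω, mul_comm, phase]

lemma continuous_integral_character (hε : ∀ s, Measurable (ε s))
    (hε_cont : ∀ ω, Continuous fun s => ε s ω) :
    Continuous fun p : ℝ × ℝ≥0 => ∫ ω, character p.1 (ε p.2) ω ∂μ := by
  refine continuous_of_dominated (bound := fun _ => 1)
    (fun p => (stronglyMeasurable_character p.1 (hε p.2)).aestronglyMeasurable)
    (fun p => .of_forall fun ω => (norm_character p.1 (ε p.2) ω).le) (integrable_const _)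
    (.of_forall fun ω => ?_)
  have := hε_cont ω
  unfold character
  fun_prop

lemma eventually_forall_integral_character_ne_zero (hε : ∀ s, Measurable (ε s))
    (hε_cont : ∀ ω, Continuous fun s => ε s ω) (θ : ℝ≥0) :
    ∀ᶠ v in 𝓝 0, ∀ s ∈ Icc 0 θ, ∫ ω, character v (ε s) ω ∂μ ≠ 0 := by
  refine isCompact_Icc.eventually_forall_of_forall_eventually fun s _ => ?_
  refine (continuous_integral_character hε hε_cont).continuousAt.eventually_ne ?_
  simp [character]

lemma factorsAt_of_indep_pastIncrements (hε : ∀ s, Measurable (ε s))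
    (hε_cont : ∀ ω, Continuous fun s => ε s ω)
    (hback : ∀ s, Indep (pastIncrements ε s) (MeasurableSpace.comap (ε s) inferInstance) μ)
    (v : ℝ) (θ : ℝ≥0) : FactorsAt μ ε v θ := by
  have hlim : Tendsto (fun n : ℕ => v / 2 ^ n) atTop (𝓝 0) :=
    tendsto_const_nhds.div_atTop (tendsto_pow_atTop_atTop_of_one_lt one_lt_two)
  obtain ⟨n, hn⟩ := (hlim.eventually
    (eventually_forall_integral_character_ne_zero (μ := μ) hε hε_cont θ)).exists
  have hsmall : FactorsAt μ ε (v / 2 ^ n) θ :=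
    .of_integral_character_ne_zero hε hback fun s hs => hn s ⟨zero_le, hs⟩
  simpa only [mul_div_cancel₀ v (pow_ne_zero n (two_ne_zero' ℝ))]
    using hsmall.two_pow_mul hε hε_cont n

end Frequencies

section FutureIndependence

variable {Ω : Type*} {m m0 : MeasurableSpace Ω} {μ : Measure Ω}

lemma indep_comap_of_forall_meanIndep_character [IsFiniteMeasure μ] {X : Ω → ℝ} (hm : m ≤ m0)
    (hX : Measurable X) (h : ∀ v, MeanIndep (character v X) m μ) :
    Indep m (MeasurableSpace.comap X inferInstance) μ := by
  rw [Indep_iff]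
  rintro A _ hA ⟨B, hB, rfl⟩
  have hlaw : (μ.restrict A).map X = (μ A).toNNReal • μ.map X := by
    refine Measure.ext_of_charFun (funext fun v => ?_)
    rw [← integral_character v hX, charFun_apply_real, integral_smul_nnreal_measure,
      ← charFun_apply_real, ← integral_character v hX]
    exact (h v).setIntegral_eq hm (integrable_character v hX) hA
  have hB' := congrArg (· B) hlaw
  simp only [Measure.smul_apply, Measure.map_apply hX hB, Measure.restrict_apply (hX hB)] at hB'
  rw [inter_comm, hB', ENNReal.smul_def, ENNReal.coe_toNNReal (measure_ne_top μ A), smul_eq_mul]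

variable [IsProbabilityMeasure μ] {ε : ℝ≥0 → Ω → ℝ} {s t : ℝ≥0}

lemma indep_pastIncrements_sub (hε : ∀ s, Measurable (ε s))
    (hε_cont : ∀ ω, Continuous fun s => ε s ω)
    (hback : ∀ s, Indep (pastIncrements ε s) (MeasurableSpace.comap (ε s) inferInstance) μ)
    (hst : s ≤ t) :
    Indep (pastIncrements ε s) (MeasurableSpace.comap (fun ω => ε s ω - ε t ω) inferInstance) μ :=
  indep_comap_of_forall_meanIndep_character (pastIncrements_le hε s) ((hε s).sub (hε t)) fun v =>
    factorsAt_of_indep_pastIncrements hε hε_cont hback v t s t hst le_rfl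

lemma indep_pastIncrements_sup_biSup_comap (hε : ∀ s, Measurable (ε s))
    (hε_cont : ∀ ω, Continuous fun s => ε s ω)
    (hback : ∀ s, Indep (pastIncrements ε s) (MeasurableSpace.comap (ε s) inferInstance) μ)
    (S : Finset ℝ≥0) (hS : ∀ s ∈ S, t ≤ s) :
    Indep (pastIncrements ε t) (MeasurableSpace.comap (ε t) inferInstance ⊔
      ⨆ s ∈ S, MeasurableSpace.comap (ε s) inferInstance) μ := by
  induction S using Finset.induction_on_min generalizing t with
  | empty => simpa using hback t
  | insert a S ha ih =>
    have hta : t ≤ a := hS a (Finset.mem_insert_self a S)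
    set m := MeasurableSpace.comap (ε a) inferInstance ⊔
      ⨆ s ∈ S, MeasurableSpace.comap (ε s) inferInstance with hm
    have h_sub_le : pastIncrements ε t ⊔
        MeasurableSpace.comap (fun ω => ε t ω - ε a ω) inferInstance ≤ pastIncrements ε a :=
      sup_le (monotone_pastIncrements ε hta) (measurable_pastIncrements_sub ε hta).comap_le
    have h := indep_sup_right (pastIncrements_le hε t) ((hε t).sub (hε a)).comap_le
      (sup_le (hε a).comap_le (iSup₂_le fun s _ => (hε s).comap_le))
      (indep_pastIncrements_sub hε hε_cont hback hta)
      (indep_of_indep_of_le_left (ih fun s hs => (ha s hs).le) h_sub_le)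
    refine indep_of_indep_of_le_right h ?_
    rw [Finset.iSup_insert, ← hm]
    refine sup_le (measurable_iff_comap_le.mp ?_) le_sup_right
    have h_add := ((comap_measurable fun ω => ε t ω - ε a ω).mono
      (le_sup_left (b := m)) le_rfl).add
      ((comap_measurable (ε a)).mono (le_sup_of_le_right le_sup_left) le_rfl)
    rwa [show (fun ω => ε t ω - ε a ω) + ε a = ε t from sub_add_cancel _ _] at h_add

lemma indep_pastIncrements_biSup_comap_Ici (hε : ∀ s, Measurable (ε s))
    (hε_cont : ∀ ω, Continuous fun s => ε s ω)
    (hback : ∀ s, Indep (pastIncrements ε s) (MeasurableSpace.comap (ε s) inferInstance) μ)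
    (t : ℝ≥0) :
    Indep (pastIncrements ε t) (⨆ s ∈ Ici t, MeasurableSpace.comap (ε s) inferInstance) μ := by
  have hfin (S : Finset (Ici t)) :
      Indep (⨆ s ∈ S, MeasurableSpace.comap (ε s) inferInstance) (pastIncrements ε t) μ := by
    have h := indep_pastIncrements_sup_biSup_comap hε hε_cont hback
      (S.map (.subtype (· ∈ Ici t))) (t := t) (by simp +contextual)
    refine indep_of_indep_of_le_left h.symm (le_trans (iSup₂_le fun s hs => ?_) le_sup_right)
    exact le_iSup₂_of_le (f := fun s _ => MeasurableSpace.comap (ε s) inferInstance) s.1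
      (Finset.mem_map_of_mem _ hs) le_rfl
  have hdir : Directed (· ≤ ·) fun S : Finset (Ici t) =>
      ⨆ s ∈ S, MeasurableSpace.comap (ε s) inferInstance :=
    Monotone.directed_le fun S T hST => biSup_mono hST
  rw [iSup_subtype', iSup_eq_iSup_finset]
  exact (indep_iSup_of_directed_le hfin (fun S => iSup₂_le fun s _ => (hε s).comap_le)
    (pastIncrements_le hε t) hdir).symm

end FutureIndependence

section RunningInfimum

lemma measurable_runInf {Ω : Type*} {m : MeasurableSpace Ω} {X : ℝ≥0 → Ω → ℝ} {t : ℝ≥0}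
    (hX : ∀ s ≤ t, Measurable[m] (X s)) (hX_cont : ∀ ω, Continuous fun s => X s ω) :
    Measurable[m] (runInf X t) := by
  have hX_restrict (ω : Ω) : Continuous fun s : Icc 0 t => X s ω :=
    (hX_cont ω).comp continuous_subtype_val
  obtain ⟨S, hS_countable, hS_dense⟩ := TopologicalSpace.exists_countable_dense (Icc 0 t)
  have h_eq : runInf X t = fun ω => ⨅ s : S, X s ω := funext fun ω =>
    (hS_dense.ciInf (hX_restrict ω) (isCompact_range (hX_restrict ω)).bddBelow).symm
  have : Countable S := hS_countable
  rw [h_eq]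
  exact .iInf fun s => hX _ s.1.2.2

end RunningInfimum

section InsiderInformation

variable {Ω : Type*} {m0 : MeasurableSpace Ω} {P : Measure Ω} {F : Filtration ℝ≥0 m0}
  {X : ℝ≥0 → Ω → ℝ} {L : Ω → ℝ} {ε : ℝ≥0 → Ω → ℝ} {φ : Ω × ℝ → ℝ} {s t θ : ℝ≥0}

lemma measurable_insiderSigma_add (F : Filtration ℝ≥0 m0) (L : Ω → ℝ) (ε : ℝ≥0 → Ω → ℝ)
    (hst : s ≤ t) : Measurable[insiderSigma F L ε t] fun ω => L ω + ε s ω :=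
  measurable_iff_comap_le.mpr <| le_sup_of_le_right <|
    le_iSup₂_of_le (f := fun s (_ : s ∈ Iic t) => MeasurableSpace.comap
      (fun ω => L ω + ε s ω) inferInstance) s hst le_rfl

lemma insiderSigma_eq_sup_pastIncrements (F : Filtration ℝ≥0 m0) (L : Ω → ℝ)
    (ε : ℝ≥0 → Ω → ℝ) (t : ℝ≥0) :
    insiderSigma F L ε t =
      (F t ⊔ MeasurableSpace.comap (fun ω => L ω + ε t ω) inferInstance) ⊔ pastIncrements ε t := by
  refine le_antisymm (sup_le (le_sup_of_le_left le_sup_left) (iSup₂_le fun s hs => ?_))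
    (sup_le (sup_le le_sup_left ?_) (iSup₂_le fun s hs => ?_))
  · have h_add := ((comap_measurable fun ω => L ω + ε t ω).mono
      (le_sup_of_le_left (le_sup_right (a := F t))) le_rfl).add
      ((measurable_pastIncrements_sub ε hs).mono le_sup_right le_rfl)
    refine measurable_iff_comap_le.mp ?_
    simpa only [Pi.add_def, add_add_sub_cancel] using h_add
  · exact (measurable_insiderSigma_add F L ε le_rfl).comap_le
  · have h_sub := (measurable_insiderSigma_add F L ε hs).sub
      (measurable_insiderSigma_add F L ε le_rfl)
    refine measurable_iff_comap_le.mp ?_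
    simpa only [Pi.sub_def, add_sub_add_left_eq_sub] using h_sub

/-- The σ-algebra `σ(ε_s : s ≥ t) ∨ F_∞ ∨ σ(L)` generated by the noise from time `t` on and by
everything the noise is independent of. It carries the payoffs at all times `θ ≥ t`. -/
abbrev futureSigma (F : Filtration ℝ≥0 m0) (L : Ω → ℝ) (ε : ℝ≥0 → Ω → ℝ) (t : ℝ≥0) :
    MeasurableSpace Ω :=
  (⨆ s ∈ Ici t, MeasurableSpace.comap (ε s) inferInstance) ⊔
    ((⨆ s, F s) ⊔ MeasurableSpace.comap L inferInstance)

lemma futureSigma_le (hL : Measurable L) (hε : ∀ s, Measurable (ε s)) (t : ℝ≥0) :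
    futureSigma F L ε t ≤ m0 :=
  sup_le (iSup₂_le fun s _ => (hε s).comap_le) (sup_le (iSup_le F.le) hL.comap_le)

lemma le_futureSigma (F : Filtration ℝ≥0 m0) (L : Ω → ℝ) (ε : ℝ≥0 → Ω → ℝ) (s t : ℝ≥0) :
    F s ≤ futureSigma F L ε t :=
  le_sup_of_le_right (le_sup_of_le_left (le_iSup F s))

lemma measurable_futureSigma_barrier (F : Filtration ℝ≥0 m0) (L : Ω → ℝ) (ε : ℝ≥0 → Ω → ℝ)
    (t : ℝ≥0) : Measurable[futureSigma F L ε t] L :=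
  (comap_measurable L).mono (le_sup_of_le_right le_sup_right) le_rfl

lemma measurable_futureSigma_noise (F : Filtration ℝ≥0 m0) (L : Ω → ℝ) (ε : ℝ≥0 → Ω → ℝ)
    (hts : t ≤ s) : Measurable[futureSigma F L ε t] (ε s) :=
  measurable_iff_comap_le.mpr <| le_sup_of_le_left <|
    le_iSup₂_of_le (f := fun s (_ : s ∈ Ici t) => MeasurableSpace.comap (ε s) inferInstance)
      s hts le_rfl

lemma indep_pastIncrements_futureSigma [IsProbabilityMeasure P] (hL : Measurable L)
    (hε : ∀ s, Measurable (ε s)) (hε_cont : ∀ ω, Continuous fun s => ε s ω)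
    (hε_indep : Indep (⨆ s, MeasurableSpace.comap (ε s) inferInstance)
      ((⨆ s, F s) ⊔ MeasurableSpace.comap L inferInstance) P)
    (hback : ∀ s, Indep (pastIncrements ε s) (MeasurableSpace.comap (ε s) inferInstance) P)
    (t : ℝ≥0) : Indep (pastIncrements ε t) (futureSigma F L ε t) P := by
  have hε_iSup (s : ℝ≥0) : Measurable[⨆ s, MeasurableSpace.comap (ε s) inferInstance] (ε s) :=
    measurable_iff_comap_le.mpr (le_iSup (fun s => MeasurableSpace.comap (ε s) inferInstance) s)
  refine indep_sup_right (pastIncrements_le hε t) (iSup₂_le fun s _ => (hε s).comap_le)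
    (sup_le (iSup_le F.le) hL.comap_le) (indep_pastIncrements_biSup_comap_Ici hε hε_cont hback t)
    (indep_of_indep_of_le_left hε_indep ?_)
  exact sup_le (pastIncrements_le hε_iSup t) (iSup₂_le fun s _ => (hε_iSup s).comap_le)

theorem noisy_information_drop_past_increments_general {E : Type*} [NormedAddCommGroup E]
    [NormedSpace ℝ E] [CompleteSpace E] [IsProbabilityMeasure P] (hL : Measurable L)
    (hε : ∀ s, Measurable (ε s)) (hε_cont : ∀ ω, Continuous fun s => ε s ω)
    (hε_indep : Indep (⨆ s, MeasurableSpace.comap (ε s) inferInstance)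
      ((⨆ s, F s) ⊔ MeasurableSpace.comap L inferInstance) P)
    (hback : ∀ s, Indep (pastIncrements ε s) (MeasurableSpace.comap (ε s) inferInstance) P)
    {f : Ω → E} (hf : StronglyMeasurable[futureSigma F L ε t] f) (hfi : Integrable f P) :
    P[f | insiderSigma F L ε t] =ᵐ[P]
      P[f | F t ⊔ MeasurableSpace.comap (fun ω => L ω + ε t ω) inferInstance] := by
  rw [insiderSigma_eq_sup_pastIncrements]
  refine condExp_sup_of_indep (sup_le (le_futureSigma F L ε t t) ?_) (pastIncrements_le hε t)
    (futureSigma_le hL hε t) (indep_pastIncrements_futureSigma hL hε hε_cont hε_indep hback t)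
    hf hfi
  exact ((measurable_futureSigma_barrier F L ε t).add
    (measurable_futureSigma_noise F L ε le_rfl)).comap_le

lemma measurable_futureSigma_payoff (hX : Adapted F X) (hX_cont : ∀ ω, Continuous fun s => X s ω)
    (L : Ω → ℝ) (ε : ℝ≥0 → Ω → ℝ) (htθ : t ≤ θ) (hφ : Measurable[(F θ).prod inferInstance] φ) :
    Measurable[futureSigma F L ε t] fun ω =>
      φ (ω, L ω + ε θ ω) * (if L ω < runInf X θ ω then 1 else 0) := by
  have hLm : Measurable[futureSigma F L ε t] L := measurable_futureSigma_barrier F L ε t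
  have h_pair : @Measurable Ω (Ω × ℝ) (futureSigma F L ε t) ((F θ).prod inferInstance)
      fun ω => (ω, L ω + ε θ ω) :=
    @Measurable.prodMk Ω (futureSigma F L ε t) Ω ℝ (F θ) inferInstance id _
      (measurable_id.mono (le_futureSigma F L ε θ t) le_rfl)
      (hLm.add (measurable_futureSigma_noise F L ε htθ))
  have h_runInf : Measurable[futureSigma F L ε t] (runInf X θ) :=
    measurable_runInf (fun s _ => (hX s).mono (le_futureSigma F L ε s t) le_rfl) hX_cont
  exact (hφ.comp h_pair).mul (.ite (m := futureSigma F L ε t) (measurableSet_lt hLm h_runInf)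
    (@measurable_const _ _ _ (futureSigma F L ε t) 1)
    (@measurable_const _ _ _ (futureSigma F L ε t) 0))

lemma integrable_mul_ite_one_zero [IsFiniteMeasure P] {f : Ω → ℝ} {p : Ω → Prop}
    [DecidablePred p] (hf : Measurable fun ω => f ω * (if p ω then 1 else 0)) {C : ℝ}
    (hC : ∀ ω, |f ω| ≤ C) :
    Integrable (fun ω => f ω * (if p ω then 1 else 0)) P := by
  refine .of_bound hf.aestronglyMeasurable C (.of_forall fun ω => ?_)
  calc ‖f ω * (if p ω then 1 else 0)‖ ≤ ‖f ω‖ * 1 := by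
        rw [norm_mul]
        gcongr
        split_ifs <;> simp
    _ ≤ C := (mul_one _).trans_le (hC ω)

end InsiderInformation

/-- **First reduction step in the proof of Proposition 5.1.** In the noisy-barrier setup,
for `0 ≤ t ≤ θ` and bounded `F_θ ⊗ B(ℝ)`-measurable `φ_θ`, `P`-a.s.,
`E_P[φ_θ(·, L + ε_θ) 1_{X*_θ > L} | F^I_t] = E_P[φ_θ(·, L + ε_θ) 1_{X*_θ > L} | F_t ∨
σ(L_t)]`: the past noise increments can be dropped from the conditioning. -/
theorem noisy_information_drop_past_increments
    {Ω : Type*} [m0 : MeasurableSpace Ω] {P : Measure Ω} [IsProbabilityMeasure P]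
    (F : Filtration ℝ≥0 m0)
    (X : ℝ≥0 → Ω → ℝ) (hX_adapted : Adapted F X)
    (hX_cont : ∀ ω, Continuous fun s => X s ω)
    (L : Ω → ℝ) (hL : Measurable L)
    -- the noise process: continuous, independent of `F_∞ ∨ σ(L)`, with backwardly
    -- independent increments
    (ε : ℝ≥0 → Ω → ℝ) (hε_meas : ∀ s, Measurable (ε s))
    (hε_cont : ∀ ω, Continuous fun s => ε s ω)
    (hε_indep : Indep (⨆ s, MeasurableSpace.comap (ε s) inferInstance)
      ((⨆ s, F s) ⊔ MeasurableSpace.comap L inferInstance) P)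
    (hε_back : ∀ t θ : ℝ≥0, t ≤ θ →
      Indep (⨆ s ∈ Set.Iic t, MeasurableSpace.comap (fun ω => ε s ω - ε t ω) inferInstance)
        (MeasurableSpace.comap (ε θ) inferInstance) P)
    -- times and payoff
    (t θ : ℝ≥0) (htθ : t ≤ θ)
    (φ : Ω × ℝ → ℝ)
    (hφ_meas : Measurable[(F θ).prod inferInstance] φ)
    (hφ_bdd : ∃ C, ∀ z, |φ z| ≤ C) :
    (P[fun ω => φ (ω, L ω + ε θ ω) *
        (if L ω < runInf X θ ω then 1 else 0)|insiderSigma F L ε t]) =ᵐ[P]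
    (P[fun ω => φ (ω, L ω + ε θ ω) *
        (if L ω < runInf X θ ω then 1 else 0)|
          F t ⊔ MeasurableSpace.comap (fun ω => L ω + ε t ω) inferInstance]) := by
  obtain ⟨C, hC⟩ := hφ_bdd
  have hf := measurable_futureSigma_payoff hX_adapted hX_cont L ε htθ hφ_meas
  exact noisy_information_drop_past_increments_general hL hε_meas hε_cont hε_indep
    (fun s => hε_back s s le_rfl) hf.stronglyMeasurable
    (integrable_mul_ite_one_zero (hf.mono (futureSigma_le hL hε_meas t) le_rfl) fun _ => hC _)
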